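/- arXiv:2109.02756 — 2 statements merged into one kernel-verified Lean document; each statement's English description precedes it below -/
import Mathlib

section
/- Let P ∈ ℝ^{n×n} be symmetric positive semidefinite, q ∈ ℝⁿ, H ∈ ℝ^{m×n}, g ∈ ℝᵐ, D ⊆ ℝⁿ nonempty closed convex, K ⊆ ℝᵐ a nonempty closed convex cone with polar cone K°, and α > 0. Let the sequence {w^j, z^j, v^j} be generated by the PIPG iteration: w^{j+1} = π_{K°}[v^j + α(H z^j − g)], z^{j+1} = π_D[z^j − α(P z^j + q + Hᵀ w^{j+1})], v^{j+1} = w^{j+1} + α H(z^{j+1} − z^j). Let ν ≥ ‖H‖. Then for all j ≥ 3, d(H z^j − g | N_{K°}(w^j)) ≤ (1/α)‖w^j − w^{j−1}‖ + ν‖z^j − 2z^{j−1} + z^{j−2}‖. -/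
open scoped RealInnerProductSpace
open Filter Topology Metric ContinuousLinearMap

/-- Projection onto a set: the unique nearest point, when it exists
(it exists and is unique for nonempty closed convex sets in Euclidean space). -/
noncomputable def proj {E : Type*} [NormedAddCommGroup E] [InnerProductSpace ℝ E]
    (S : Set E) (x : E) : E :=
  open Classical in
  if h : ∃ y, y ∈ S ∧ ∀ z ∈ S, ‖x - y‖ ≤ ‖x - z‖ then h.choose else 0

/-- The polar cone `K° = {w | ⟪w, y⟫ ≤ 0 for all y ∈ K}`. -/
def polarCone {E : Type*} [NormedAddCommGroup E] [InnerProductSpace ℝ E]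
    (K : Set E) : Set E := {w | ∀ y ∈ K, ⟪w, y⟫ ≤ 0}

/-- The recession cone `rec D = {y | y + z ∈ D for all z ∈ D}`. -/
def recCone {E : Type*} [NormedAddCommGroup E] (D : Set E) : Set E :=
  {y | ∀ z ∈ D, y + z ∈ D}

/-- The normal cone of `D` at `z`: `N_D(z) = {y | ⟪y, z' - z⟫ ≤ 0 for all z' ∈ D}`. -/
def normalCone {E : Type*} [NormedAddCommGroup E] [InnerProductSpace ℝ E]
    (D : Set E) (z : E) : Set E := {y | ∀ z' ∈ D, ⟪y, z' - z⟫ ≤ 0}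

theorem proj_normal {E : Type*} [NormedAddCommGroup E] [InnerProductSpace ℝ E] [CompleteSpace E]
    {S : Set E} (hne : S.Nonempty) (hcl : IsClosed S) (hconv : Convex ℝ S) (x : E) :
    ∀ y ∈ S, ⟪x - proj S x, y - proj S x⟫ ≤ 0 := by
  have hbdd : BddBelow (Set.range fun w : S => ‖x - w‖) :=
    ⟨0, by rintro _ ⟨w, rfl⟩; exact norm_nonneg _⟩
  have hex : ∃ y, y ∈ S ∧ ∀ z ∈ S, ‖x - y‖ ≤ ‖x - z‖ := by
    obtain ⟨y, hy, h⟩ := exists_norm_eq_iInf_of_complete_convex hne hcl.isComplete hconv x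
    refine ⟨y, hy, fun z hz => ?_⟩
    rw [h]
    exact ciInf_le hbdd ⟨z, hz⟩
  have hp : proj S x = hex.choose := by
    unfold _root_.proj
    exact dif_pos hex
  obtain ⟨h1, h2⟩ := hex.choose_spec
  rw [hp]
  haveI : Nonempty S := hne.to_subtype
  exact (norm_eq_iInf_iff_real_inner_le_zero hconv h1).1
    (le_antisymm (le_ciInf fun w => h2 w w.2) (ciInf_le hbdd ⟨_, h1⟩))

theorem polarCone_props {E : Type*} [NormedAddCommGroup E] [InnerProductSpace ℝ E]
    (K : Set E) :
    (polarCone K).Nonempty ∧ IsClosed (polarCone K) ∧ Convex ℝ (polarCone K) := by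
  refine ⟨⟨0, fun y _ => by simp⟩, ?_, ?_⟩
  · have : polarCone K = ⋂ y ∈ K, {w | ⟪w, y⟫ ≤ 0} := by
      ext w; simp [polarCone]
    rw [this]
    exact isClosed_biInter fun y _ => isClosed_le (by fun_prop) continuous_const
  · intro a ha b hb s t hs ht _ y hy
    rw [inner_add_left, real_inner_smul_left, real_inner_smul_left]
    have h1 := mul_nonpos_of_nonneg_of_nonpos hs (ha y hy)
    have h2 := mul_nonpos_of_nonneg_of_nonpos ht (hb y hy)
    linarith

/-- distance bound for the dual optimality residual of PIPG. -/
theorem stmt3 {n m : ℕ} (α : ℝ) (hα0 : 0 < α)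
    (P : EuclideanSpace ℝ (Fin n) →L[ℝ] EuclideanSpace ℝ (Fin n))
    (hPsa : IsSelfAdjoint P) (hPpsd : ∀ x, 0 ≤ ⟪P x, x⟫)
    (q : EuclideanSpace ℝ (Fin n))
    (H : EuclideanSpace ℝ (Fin n) →L[ℝ] EuclideanSpace ℝ (Fin m))
    (g : EuclideanSpace ℝ (Fin m))
    (D : Set (EuclideanSpace ℝ (Fin n)))
    (hDne : D.Nonempty) (hDcl : IsClosed D) (hDconv : Convex ℝ D)
    (K : Set (EuclideanSpace ℝ (Fin m)))
    (hKne : K.Nonempty) (hKcl : IsClosed K) (hKconv : Convex ℝ K)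
    (hKcone : ∀ w ∈ K, ∀ a : ℝ, 0 ≤ a → a • w ∈ K)
    (w v : ℕ → EuclideanSpace ℝ (Fin m))
    (z : ℕ → EuclideanSpace ℝ (Fin n))
    (hw : ∀ j : ℕ, w (j + 1) = proj (polarCone K) (v j + α • (H (z j) - g)))
    (hz : ∀ j : ℕ, z (j + 1) =
      proj D (z j - α • (P (z j) + q + (ContinuousLinearMap.adjoint H) (w (j + 1)))))
    (hv : ∀ j : ℕ, v (j + 1) = w (j + 1) + α • H (z (j + 1) - z j))
    (ν : ℝ) (hν : ‖H‖ ≤ ν) :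
    ∀ j : ℕ, 3 ≤ j →
      Metric.infDist (H (z j) - g) (normalCone (polarCone K) (w j))
        ≤ (1/α) * ‖w j - w (j - 1)‖ + ν * ‖z j - (2 : ℝ) • z (j - 1) + z (j - 2)‖ := by
  intro j hj
  obtain ⟨k, rfl⟩ : ∃ k, j = k + 3 := ⟨j - 3, by omega⟩
  have e1 : k + 3 - 1 = k + 2 := by omega
  have e2 : k + 3 - 2 = k + 1 := by omega
  rw [e1, e2]
  obtain ⟨hn, hc, hcv⟩ := polarCone_props K
  have hpr := proj_normal hn hc hcv (v (k + 2) + α • (H (z (k + 2)) - g))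
  have hw' : w (k + 3) = _ := hw (k + 2)
  have hv' : v (k + 2) = w (k + 2) + α • H (z (k + 2) - z (k + 1)) := hv (k + 1)
  rw [← hw', hv'] at hpr
  have hmem : (1/α) • (w (k + 2) + α • H (z (k + 2) - z (k + 1)) + α • (H (z (k + 2)) - g)
      - w (k + 3)) ∈ normalCone (polarCone K) (w (k + 3)) := by
    intro y hy
    rw [real_inner_smul_left]
    exact mul_nonpos_of_nonneg_of_nonpos (by positivity) (hpr y hy)
  refine (Metric.infDist_le_dist_of_mem hmem).trans ?_
  have key : H (z (k + 3)) - g - (1/α) • (w (k + 2) + α • H (z (k + 2) - z (k + 1))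
      + α • (H (z (k + 2)) - g) - w (k + 3))
      = (1/α) • (w (k + 3) - w (k + 2))
        + H (z (k + 3) - (2 : ℝ) • z (k + 2) + z (k + 1)) := by
    simp only [map_add, map_sub, map_smul]
    match_scalars <;> field_simp <;> ring
  rw [dist_eq_norm, key]
  refine (norm_add_le _ _).trans (add_le_add ?_ ?_)
  · rw [norm_smul, Real.norm_of_nonneg (by positivity)]
  · exact (H.le_opNorm _).trans (mul_le_mul_of_nonneg_right hν (norm_nonneg _))
end

section
/- Let P ∈ ℝ^{n×n} be symmetric positive semidefinite, q ∈ ℝⁿ, H ∈ ℝ^{m×n}, g ∈ ℝᵐ, D ⊆ ℝⁿ nonempty closed convex, K ⊆ ℝᵐ a nonempty closed convex cone with polar cone K°. Suppose the step size α satisfies 0 < α ≤ (8 − 4/γ)/(√(λ² + 16ν²) + λ) for some γ ∈ (1/2, 1), λ ≥ ‖P‖, ν ≥ ‖H‖. Let the sequence {w^j, z^j, v^j} be generated by the PIPG iteration: w^{j+1} = π_{K°}[v^j + α(H z^j − g)], z^{j+1} = π_D[z^j − α(P z^j + q + Hᵀ w^{j+1})], v^{j+1} = w^{j+1} + α H(z^{j+1}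 − z^j). Then there exist z̄ ∈ rec D and w̄ ∈ K° such that lim_{j→∞}(z^j − z^{j−1}) = z̄ and lim_{j→∞}(w^j − w^{j−1}) = w̄; furthermore H z̄ ∈ K, P z̄ = 0, ⟨q, z̄⟩ = −(1/α)‖z̄‖², and σ_D(−Hᵀ w̄) + ⟨g, w̄⟩ = −(1/α)‖w̄‖². -/
open scoped RealInnerProductSpace
open Filter Topology Metric ContinuousLinearMap

set_option linter.unusedSectionVars false

section KN
variable {E : Type*} [NormedAddCommGroup E] [InnerProductSpace ℝ E]

lemma kn_nonexp (x : ℕ → E) (c : ℝ) (hc : 0 < c)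
    (h : ∀ n m, ‖x (n+1) - x (m+1)‖^2 + c * ‖(x (n+1) - x n) - (x (m+1) - x m)‖^2
      ≤ ‖x n - x m‖^2) (n m : ℕ) : ‖x (n+1) - x (m+1)‖ ≤ ‖x n - x m‖ := by
  have h1 := h n m
  have h2 : 0 ≤ c * ‖(x (n+1) - x n) - (x (m+1) - x m)‖^2 := by positivity
  exact le_of_sq_le_sq (by linarith) (norm_nonneg _)

lemma kn_nonexp_k (x : ℕ → E) 
    (h : ∀ n m, ‖x (n+1) - x (m+1)‖ ≤ ‖x n - x m‖) (n m k : ℕ) :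
    ‖x (n+k) - x (m+k)‖ ≤ ‖x n - x m‖ := by
  induction k with
  | zero => simp
  | succ k ih => exact (h _ _).trans ih

lemma kn_rho (x : ℕ → E) (c : ℝ) (hc : 0 < c)
    (h : ∀ n m, ‖x (n+1) - x (m+1)‖^2 + c * ‖(x (n+1) - x n) - (x (m+1) - x m)‖^2
      ≤ ‖x n - x m‖^2) :
    ∃ ρ : ℝ, 0 ≤ ρ ∧ Tendsto (fun n => ‖x (n+1) - x n‖) atTop (𝓝 ρ) ∧
      ∀ n k : ℕ, k * ρ ≤ ‖x (n+k) - x n‖ := by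
  have hne := kn_nonexp x c hc h
  have hanti : Antitone (fun n => ‖x (n+1) - x n‖) :=
    antitone_nat_of_succ_le (fun n => hne (n+1) n)
  have hlim := tendsto_atTop_ciInf hanti ⟨0, by rintro _ ⟨n, rfl⟩; exact norm_nonneg _⟩
  set ρ := ⨅ n, ‖x (n+1) - x n‖ with hρ
  have hρ0 : 0 ≤ ρ := ge_of_tendsto' hlim (fun n => norm_nonneg _)
  refine ⟨ρ, hρ0, hlim, ?_⟩
  have hsq : Tendsto (fun n => (‖x (n+1) - x n‖^2 - ‖x (n+1+1) - x (n+1)‖^2) / c) atTop (𝓝 0) := by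
    have h1 := hlim.pow 2
    have h2 := (tendsto_add_atTop_iff_nat 1).2 h1
    simpa using (h1.sub h2).div_const c
  have hd2 : Tendsto (fun n => ‖(x (n+1+1) - x (n+1)) - (x (n+1) - x n)‖^2) atTop (𝓝 0) := by
    refine squeeze_zero (fun n => by positivity) (fun n => ?_) hsq
    rw [le_div_iff₀ hc]
    have := h (n+1) n
    linarith
  have hd : Tendsto (fun n => (x (n+1+1) - x (n+1)) - (x (n+1) - x n)) atTop (𝓝 0) := by
    rw [tendsto_zero_iff_norm_tendsto_zero]
    have := hd2.sqrt
    simpa [Real.sqrt_sq] using this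
  have hdk : ∀ k, Tendsto (fun n => (x (n+k+1) - x (n+k)) - (x (n+1) - x n)) atTop (𝓝 0) := by
    intro k
    induction k with
    | zero => simp
    | succ k ih =>
      have h1 := (tendsto_add_atTop_iff_nat k).2 hd
      have h2 := h1.add ih
      simp only [add_zero] at h2
      refine h2.congr (fun n => ?_)
      simp only [← add_assoc]
      abel
  have hxk : ∀ k : ℕ, Tendsto (fun n => (x (n+k) - x n) - (k:ℝ) • (x (n+1) - x n)) atTop (𝓝 0) := by
    intro k
    induction k with
    | zero => simp
    | succ k ih =>
      have h2 := ih.add (hdk k)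
      simp only [add_zero] at h2
      refine h2.congr (fun n => ?_)
      simp only [← add_assoc]
      push_cast
      module
  intro n k
  have hlk : Tendsto (fun i => (k:ℝ) * ‖x (i+1) - x i‖ - ‖(x (i+k) - x i) - (k:ℝ) • (x (i+1) - x i)‖)
      atTop (𝓝 (k * ρ - 0)) := by
    refine (hlim.const_mul _).sub ?_
    simpa using (hxk k).norm
  rw [sub_zero] at hlk
  refine le_of_tendsto hlk ?_
  filter_upwards [eventually_ge_atTop n] with i hi
  obtain ⟨j, rfl⟩ := Nat.exists_eq_add_of_le hi
  have h1 := kn_nonexp_k x hne (n+k) n j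
  have h2 : ‖(k:ℝ) • (x (n+j+1) - x (n+j))‖ = k * ‖x (n+j+1) - x (n+j)‖ := by
    rw [norm_smul]; simp
  have h3 := norm_sub_norm_le ((k:ℝ) • (x (n+j+1) - x (n+j))) (x (n+j+k) - x (n+j))
  rw [norm_sub_rev ((k:ℝ) • (x (n+j+1) - x (n+j))), h2] at h3
  have h4 : n + j + k = n + k + j := by ring
  rw [h4] at h3 ⊢
  linarith

lemma kn_dir [FiniteDimensional ℝ E] (x : ℕ → E)
    (h : ∀ n m, ‖x (n+1) - x (m+1)‖ ≤ ‖x n - x m‖) (ρ : ℝ) (hρ0 : 0 ≤ ρ)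
    (hlim : Tendsto (fun n => ‖x (n+1) - x n‖) atTop (𝓝 ρ))
    (hk : ∀ k : ℕ, k * ρ ≤ ‖x k - x 0‖) :
    ∃ f : E, ‖f‖ ≤ ρ ∧ ρ^2 ≤ ⟪f, x 1 - x 0⟫ ∧
      Tendsto (fun k : ℕ => (k:ℝ)⁻¹ • (x k - x 0)) atTop (𝓝 f) := by
  have key : ∀ i : ℕ, ∃ f : E, f ∈ closedBall (0:E) 1 ∧ ∀ k ≤ i,
      k * (ρ - 1/((i:ℝ)+1)) ≤ ⟪f, x k - x 0⟫ := by
    intro i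
    have hε : 0 < 1/((i:ℝ)+1) := by positivity
    set ε := 1/((i:ℝ)+1)
    have hb : Tendsto (fun n : ℕ => ‖x n - x 0‖ - (ρ - ε) * n) atTop atTop := by
      refine tendsto_atTop_mono (f := fun n : ℕ => ε * (n:ℝ)) (fun n => ?_)
        (tendsto_natCast_atTop_atTop.const_mul_atTop hε)
      have := hk n
      linarith
    obtain ⟨n, hn, hrec⟩ := high_scores hb i
    refine ⟨‖x n - x 0‖⁻¹ • (x n - x 0), ?_, ?_⟩
    · rw [mem_closedBall_zero_iff, norm_smul, norm_inv, norm_norm]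
      exact inv_mul_le_one
    · intro k hki
      set f := ‖x n - x 0‖⁻¹ • (x n - x 0) with hf
      have hf1 : ‖f‖ ≤ 1 := by
        rw [hf, norm_smul, norm_inv, norm_norm]
        exact inv_mul_le_one
      have hfX : ⟪f, x n - x 0⟫ = ‖x n - x 0‖ := by
        rw [hf, real_inner_smul_left, real_inner_self_eq_norm_sq]
        by_cases h0 : ‖x n - x 0‖ = 0
        · simp [h0]
        · field_simp
      have h1 : ⟪f, x n - x k⟫ ≤ ‖x n - x k‖ :=
        (real_inner_le_norm _ _).trans (mul_le_of_le_one_left (norm_nonneg _) hf1)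
      have hkn : k ≤ n := hki.trans hn
      obtain ⟨j, rfl⟩ := Nat.exists_eq_add_of_le hkn
      have h2 := kn_nonexp_k x h j 0 k
      rw [zero_add, add_comm j k] at h2
      have h3 : ⟪f, x k - x 0⟫ = ⟪f, x (k+j) - x 0⟫ - ⟪f, x (k+j) - x k⟫ := by
        rw [← inner_sub_right]; congr 1; abel
      rw [h3, hfX]
      rcases Nat.eq_zero_or_pos k with rfl | hkpos
      · have : ‖x (0+j) - x 0‖ = ‖x (0+j) - x 0‖ := rfl
        push_cast
        rw [zero_mul]
        linarith
      · have := hrec j (by omega)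
        push_cast at this
        linarith
  choose F hF hFk using key
  obtain ⟨f, hf, φ, hφ, hfl⟩ := (isCompact_closedBall (0:E) 1).tendsto_subseq hF
  have hfk : ∀ k : ℕ, k * ρ ≤ ⟪f, x k - x 0⟫ := by
    intro k
    have h1 : Tendsto (fun i => ⟪F (φ i), x k - x 0⟫) atTop (𝓝 ⟪f, x k - x 0⟫) :=
      hfl.inner tendsto_const_nhds
    have h2 : Tendsto (fun i => (k:ℝ) * (ρ - 1/((φ i:ℝ)+1))) atTop (𝓝 (k * (ρ - 0))) :=
      (tendsto_const_nhds.sub (tendsto_one_div_add_atTop_nhds_zero_nat.comp hφ.tendsto_atTop)).const_mul _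
    rw [sub_zero] at h2
    refine le_of_tendsto_of_tendsto h2 h1 ?_
    filter_upwards [eventually_ge_atTop k] with i hi
    exact hFk _ _ (hi.trans (hφ.id_le i))
  have hf1 : ‖f‖ ≤ 1 := by simpa using hf
  have hfρ : ‖ρ • f‖ ≤ ρ := by
    rw [norm_smul, Real.norm_of_nonneg hρ0]; exact mul_le_of_le_one_right hρ0 hf1
  refine ⟨ρ • f, hfρ, ?_, ?_⟩
  · have := hfk 1
    rw [real_inner_smul_left, sq]
    exact mul_le_mul_of_nonneg_left (by simpa using this) hρ0
  · have hces := hlim.cesaro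
    have hb : ∀ k : ℕ, ‖(k:ℝ)⁻¹ • (x k - x 0)‖ ≤
        (k:ℝ)⁻¹ * ∑ i ∈ Finset.range k, ‖x (i+1) - x i‖ := by
      intro k
      rw [norm_smul, norm_inv, RCLike.norm_natCast, ← Finset.sum_range_sub]
      gcongr
      exact norm_sum_le _ _
    have h0 : Tendsto (fun k : ℕ => ((k:ℝ)⁻¹ * ∑ i ∈ Finset.range k, ‖x (i+1) - x i‖)^2 - ρ^2)
        atTop (𝓝 0) := by
      have hh := (hces.pow 2).sub_const (ρ^2)
      rwa [show ρ^2 - ρ^2 = (0:ℝ) by ring] at hh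
    have h2 : Tendsto (fun k : ℕ => ‖(k:ℝ)⁻¹ • (x k - x 0) - ρ • f‖^2) atTop (𝓝 0) := by
      refine squeeze_zero' (Eventually.of_forall fun _ => by positivity) ?_ h0
      filter_upwards [eventually_gt_atTop 0] with k hkpos
      rw [norm_sub_sq_real]
      have e1 := pow_le_pow_left₀ (norm_nonneg _) (hb k) 2
      have e2 := pow_le_pow_left₀ (norm_nonneg _) hfρ 2
      have e3 : ρ ^ 2 ≤ ⟪(k:ℝ)⁻¹ • (x k - x 0), ρ • f⟫ := by
        rw [real_inner_smul_left, real_inner_smul_right, real_inner_comm]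
        have hkr : (0:ℝ) < k := by exact_mod_cast hkpos
        calc ρ^2 = (k:ℝ)⁻¹ * (ρ * (k * ρ)) := by field_simp
          _ ≤ _ := by gcongr; exact hfk k
      linarith
    rw [tendsto_iff_norm_sub_tendsto_zero]
    have := h2.sqrt
    simpa [Real.sqrt_sq] using this

lemma kn_main [FiniteDimensional ℝ E] (x : ℕ → E) (c : ℝ) (hc : 0 < c)
    (h : ∀ n m, ‖x (n+1) - x (m+1)‖^2 + c * ‖(x (n+1) - x n) - (x (m+1) - x m)‖^2
      ≤ ‖x n - x m‖^2) :
    ∃ f : E, Tendsto (fun n => x (n+1) - x n) atTop (𝓝 f) := by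
  obtain ⟨ρ, hρ0, hlim, hk⟩ := kn_rho x c hc h
  have hne := kn_nonexp x c hc h
  have key : ∀ N : ℕ, ∃ f : E, ‖f‖ ≤ ρ ∧ ρ^2 ≤ ⟪f, x (N+1) - x N⟫ ∧
      Tendsto (fun k : ℕ => (k:ℝ)⁻¹ • (x (N+k) - x N)) atTop (𝓝 f) := by
    intro N
    have := kn_dir (fun k => x (N+k)) (fun n m => hne (N+n) (N+m)) ρ hρ0 
      (by simpa [add_comm, add_left_comm, add_assoc] using (tendsto_add_atTop_iff_nat N).2 hlim) (fun k => hk N k)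
    simpa using this
  choose F hF1 hF2 hF3 using key
  have heq : ∀ N, F N = F 0 := by
    intro N
    have h1 := (hF3 N).sub (hF3 0)
    have h2 : Tendsto (fun k : ℕ => (k:ℝ)⁻¹ • (x (N+k) - x N) - (k:ℝ)⁻¹ • (x (0+k) - x 0))
        atTop (𝓝 0) := by
      have h3 : Tendsto (fun k : ℕ => (k:ℝ)⁻¹ * (2 * ‖x N - x 0‖)) atTop (𝓝 0) := by
        simpa using (tendsto_inv_atTop_nhds_zero_nat (𝕜 := ℝ)).mul_const (2 * ‖x N - x 0‖)
      refine squeeze_zero_norm (fun k => ?_) h3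
      rw [← smul_sub, norm_smul, norm_inv, RCLike.norm_natCast]
      gcongr
      have h4 := kn_nonexp_k x hne N 0 k
      have h5 : x (N+k) - x N - (x (0+k) - x 0) = (x (N+k) - x (0+k)) - (x N - x 0) := by abel
      rw [h5]
      have h6 := norm_sub_le (x (N+k) - x (0+k)) (x N - x 0)
      linarith
    exact sub_eq_zero.1 (tendsto_nhds_unique h1 h2)
  refine ⟨F 0, ?_⟩
  have h0 : Tendsto (fun k : ℕ => ‖x (k+1) - x k‖^2 - ρ^2)
        atTop (𝓝 0) := by
    have hh := (hlim.pow 2).sub_const (ρ^2)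
    rwa [show ρ^2 - ρ^2 = (0:ℝ) by ring] at hh
  have h2 : Tendsto (fun k : ℕ => ‖x (k+1) - x k - F 0‖^2) atTop (𝓝 0) := by
    refine squeeze_zero (fun _ => by positivity) (fun k => ?_) h0
    rw [norm_sub_sq_real, real_inner_comm]
    have e1 := hF2 k
    rw [heq k] at e1
    have e2 := pow_le_pow_left₀ (norm_nonneg _) (hF1 0) 2
    linarith
  rw [tendsto_iff_norm_sub_tendsto_zero]
  have := h2.sqrt
  simpa [Real.sqrt_sq] using this
end KN

lemma kn_core {V : Type*} [AddCommGroup V] [Module ℝ V] [FiniteDimensional ℝ V]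
    (core : InnerProductSpace.Core ℝ V) (x : ℕ → V) (c : ℝ) (hc : 0 < c)
    (h : ∀ n m, core.inner (x (n+1) - x (m+1)) (x (n+1) - x (m+1))
      + c * core.inner ((x (n+1) - x n) - (x (m+1) - x m)) ((x (n+1) - x n) - (x (m+1) - x m))
      ≤ core.inner (x n - x m) (x n - x m)) :
    ∃ f : V, ∀ {F : Type} [NormedAddCommGroup F] [NormedSpace ℝ F] (L : V →ₗ[ℝ] F),
      Tendsto (fun n => L (x (n+1) - x n)) atTop (𝓝 (L f)) := by
  let : NormedAddCommGroup V := core.toNormedAddCommGroup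
  let : InnerProductSpace ℝ V := InnerProductSpace.ofCore core.toCore
  have hn : ∀ a : V, ‖a‖^2 = core.inner a a := fun a => (real_inner_self_eq_norm_sq a).symm
  obtain ⟨f, hf⟩ := kn_main x c hc (by
    intro n m
    rw [hn, hn, hn]
    exact h n m)
  refine ⟨f, fun L => ?_⟩
  exact (L.continuous_of_finiteDimensional.tendsto f).comp hf

section Proj
variable {E : Type*} [NormedAddCommGroup E] [InnerProductSpace ℝ E] [CompleteSpace E]

lemma proj_spec (S : Set E) (hne : S.Nonempty) (hcl : IsClosed S) (hconv : Convex ℝ S) (x : E) :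
    proj S x ∈ S ∧ ∀ y ∈ S, ⟪x - proj S x, y - proj S x⟫ ≤ 0 := by
  have hex : ∃ y, y ∈ S ∧ ∀ z ∈ S, ‖x - y‖ ≤ ‖x - z‖ := by
    obtain ⟨y, hy, hmin⟩ := exists_norm_eq_iInf_of_complete_convex hne hcl.isComplete hconv x
    refine ⟨y, hy, fun z hz => ?_⟩
    rw [hmin]
    exact ciInf_le (f := fun w : S => ‖x - w‖) ⟨0, Set.forall_mem_range.2 fun _ => norm_nonneg _⟩ ⟨z, hz⟩
  have hp : proj S x = hex.choose := by
    unfold _root_.proj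
    rw [dif_pos hex]
  obtain ⟨h1, h2⟩ := hex.choose_spec
  rw [hp]
  refine ⟨h1, (norm_eq_iInf_iff_real_inner_le_zero hconv h1).1 ?_⟩
  have : Nonempty S := ⟨⟨_, h1⟩⟩
  refine le_antisymm (le_ciInf fun w => h2 _ w.2) ?_
  exact ciInf_le (f := fun w : S => ‖x - w‖) ⟨0, Set.forall_mem_range.2 fun _ => norm_nonneg _⟩ ⟨_, h1⟩

lemma polar_props (K : Set E) : (polarCone K).Nonempty ∧ IsClosed (polarCone K) ∧
    Convex ℝ (polarCone K) ∧ (∀ u ∈ polarCone K, ∀ a : ℝ, 0 ≤ a → a • u ∈ polarCone K) := by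
  refine ⟨⟨0, fun y _ => by simp⟩, ?_, ?_, ?_⟩
  · have : polarCone K = ⋂ y ∈ K, {w : E | ⟪w, y⟫ ≤ 0} := by
      ext w; simp [polarCone]
    rw [this]
    exact isClosed_biInter fun y _ => isClosed_le (by fun_prop) continuous_const
  · intro u hu u' hu' a b ha hb _ y hy
    rw [inner_add_left, real_inner_smul_left, real_inner_smul_left]
    have := mul_nonneg ha (neg_nonneg.2 (hu y hy))
    have := mul_nonneg hb (neg_nonneg.2 (hu' y hy))
    linarith
  · intro u hu a ha y hy
    rw [real_inner_smul_left]
    exact mul_nonpos_of_nonneg_of_nonpos ha (hu y hy)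

/-- On a cone, the variational inequality splits. -/
lemma cone_vi (C : Set E) (hC : ∀ u ∈ C, ∀ a : ℝ, 0 ≤ a → a • u ∈ C) (p u : E) (hu : u ∈ C)
    (h : ∀ y ∈ C, ⟪p, y - u⟫ ≤ 0) : ⟪p, u⟫ = 0 ∧ ∀ y ∈ C, ⟪p, y⟫ ≤ 0 := by
  have h0 := h _ (hC u hu 0 le_rfl)
  have h2 := h _ (hC u hu 2 (by norm_num))
  rw [inner_sub_right, real_inner_smul_right] at h0 h2
  have he : ⟪p, u⟫ = 0 := by linarith
  refine ⟨he, fun y hy => ?_⟩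
  have := h y hy
  rw [inner_sub_right] at this
  linarith

lemma bipolar (K : Set E) (hne : K.Nonempty) (hcl : IsClosed K) (hconv : Convex ℝ K)
    (hcone : ∀ u ∈ K, ∀ a : ℝ, 0 ≤ a → a • u ∈ K) (p : E)
    (hp : ∀ u ∈ polarCone K, ⟪p, u⟫ ≤ 0) : p ∈ K := by
  obtain ⟨h1, h2⟩ := proj_spec K hne hcl hconv p
  obtain ⟨h3, h4⟩ := cone_vi K hcone _ _ h1 h2
  have h5 := hp (p - proj K p) h4
  have h6 : ⟪p - proj K p, p - proj K p⟫ ≤ 0 := by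
    rw [inner_sub_right, h3, real_inner_comm]; linarith
  have h7 : p - proj K p = 0 := inner_self_eq_zero.1 (le_antisymm h6 real_inner_self_nonneg)
  rw [sub_eq_zero.1 h7]; exact h1

lemma proj_mono (S : Set E) (hne : S.Nonempty) (hcl : IsClosed S) (hconv : Convex ℝ S) (x y : E) :
    0 ≤ ⟪(x - y) - (proj S x - proj S y), proj S x - proj S y⟫ := by
  obtain ⟨h1, h2⟩ := proj_spec S hne hcl hconv x
  obtain ⟨h3, h4⟩ := proj_spec S hne hcl hconv y
  have e1 := h2 _ h3
  have e2 := h4 _ h1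
  have e3 : ⟪(x - y) - (proj S x - proj S y), proj S x - proj S y⟫
    = - ⟪x - proj S x, proj S y - proj S x⟫ - ⟪y - proj S y, proj S x - proj S y⟫ := by
    simp only [inner_sub_left, inner_sub_right]; ring
  linarith
end Proj

lemma step_cond (α γ lam ν : ℝ) (hγ : 1/2 < γ) (hγ1 : γ < 1) (hlam : 0 ≤ lam) 
    (hα0 : 0 < α) (hα : α ≤ (8 - 4/γ) / (Real.sqrt (lam^2 + 16*ν^2) + lam)) :
    (α * ν)^2 < 1 - α * lam / 2 := by
  have hR0 := Real.sqrt_nonneg (lam^2 + 16*ν^2)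
  have hR2 := Real.sq_sqrt (show 0 ≤ lam^2 + 16*ν^2 by positivity)
  set R := Real.sqrt (lam^2 + 16*ν^2)
  have hs : 8 - 4/γ < 4 := by
    have : 4 < 4/γ := by rw [lt_div_iff₀ (by linarith)]; linarith
    linarith
  have hpos : 0 < R + lam := by
    rcases (add_nonneg hR0 hlam).eq_or_lt with h | h
    · rw [← h] at hα; simp at hα; linarith
    · exact h
  rw [le_div_iff₀ hpos] at hα
  have h4 : α * R < 4 - α * lam := by linarith
  have h5 : (α * R)^2 < (4 - α * lam)^2 := pow_lt_pow_left₀ h4 (by positivity) (by norm_num)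
  rw [mul_pow, hR2] at h5
  nlinarith

/-- Strong positivity of the quadratic form. -/
lemma quad_pos {E F : Type*} [NormedAddCommGroup E] [InnerProductSpace ℝ E]
    [NormedAddCommGroup F] [InnerProductSpace ℝ F] (H : E →L[ℝ] F) (α t ν : ℝ) (hα0 : 0 < α)
    (hν : ‖H‖ ≤ ν) (ht : t ≤ 1) (hc : (α * ν)^2 < t) (r : E) (s : F) :
    (t - (α*ν)^2) / 2 * (‖r‖^2 + ‖s‖^2) ≤ t * ‖r‖^2 + ‖s‖^2 - 2 * α * ⟪H r, s⟫ := by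
  have hν0 : 0 ≤ ν := (norm_nonneg _).trans hν
  have h1 : ⟪H r, s⟫ ≤ ν * ‖r‖ * ‖s‖ := by
    refine (real_inner_le_norm _ _).trans ?_
    gcongr
    exact (H.le_opNorm r).trans (by gcongr)
  have h2 : 2 * α * ⟪H r, s⟫ ≤ 2 * (α * ν) * (‖r‖ * ‖s‖) := by
    calc 2 * α * ⟪H r, s⟫ ≤ 2 * α * (ν * ‖r‖ * ‖s‖) := by gcongr
      _ = _ := by ring
  set β := α * ν with hβ
  have hβ0 : 0 ≤ β := by positivity
  set c := (t - β^2)/2 with hcdef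
  have hc0 : 0 < c := by rw [hcdef]; linarith
  have ht' : t = β^2 + 2 * c := by rw [hcdef]; ring
  set a := ‖r‖
  set b := ‖s‖
  have hprod : β^2 ≤ (t - c) * (1 - c) := by nlinarith
  have hc1 : 0 < 1 - c := by nlinarith [sq_nonneg β]
  have : 0 ≤ (1 - c) * ((t - c) * a^2 + (1-c) * b^2 - 2 * β * (a * b)) := by
    nlinarith [sq_nonneg ((1-c)*b - β * a), mul_nonneg (sub_nonneg.2 hprod) (sq_nonneg a)]
  have := nonneg_of_mul_nonneg_right this hc1
  linarith

section Pipg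
variable {E F : Type} [NormedAddCommGroup E] [InnerProductSpace ℝ E] [FiniteDimensional ℝ E]
    [NormedAddCommGroup F] [InnerProductSpace ℝ F] [FiniteDimensional ℝ F]

/-- The preconditioned inner product. -/
@[reducible] noncomputable def pipgCore (H : E →L[ℝ] F) (α c : ℝ) (hc : 0 < c)
    (h : ∀ (r : E) (s : F), c * (‖r‖^2 + ‖s‖^2) ≤ ‖r‖^2 + ‖s‖^2 - 2 * α * ⟪H r, s⟫) :
    InnerProductSpace.Core ℝ (E × F) where
  inner x y := ⟪x.1, y.1⟫ + ⟪x.2, y.2⟫ - α * ⟪H x.1, y.2⟫ - α * ⟪H y.1, x.2⟫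
  conj_inner_symm x y := by
    simp only [conj_trivial, real_inner_comm x.1 y.1, real_inner_comm x.2 y.2]
    ring
  re_inner_nonneg x := by
    have := h x.1 x.2
    have h2 : 0 ≤ c * (‖x.1‖^2 + ‖x.2‖^2) := by positivity
    simp only [real_inner_self_eq_norm_sq, RCLike.re_to_real]
    linarith
  add_left x y z := by
    simp only [Prod.fst_add, Prod.snd_add, inner_add_left, inner_add_right, map_add]
    ring
  smul_left x y a := by
    simp only [Prod.smul_fst, Prod.smul_snd, real_inner_smul_left, real_inner_smul_right, map_smul,
      conj_trivial]
    ring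
  definite x hx := by
    have := h x.1 x.2
    simp only [real_inner_self_eq_norm_sq] at hx
    have h1 : c * (‖x.1‖^2 + ‖x.2‖^2) ≤ 0 := by linarith
    have h2 : ‖x.1‖^2 + ‖x.2‖^2 ≤ 0 := nonpos_of_mul_nonpos_right h1 hc
    have h3 : ‖x.1‖^2 = 0 := le_antisymm (by linarith [sq_nonneg ‖x.2‖]) (sq_nonneg _)
    have h4 : ‖x.2‖^2 = 0 := le_antisymm (by linarith [sq_nonneg ‖x.1‖]) (sq_nonneg _)
    have h5 : x.1 = 0 := by simpa using h3
    have h6 : x.2 = 0 := by simpa using h4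
    exact Prod.ext h5 h6

lemma pipgCore_self (H : E →L[ℝ] F) (α c : ℝ) (hc : 0 < c)
    (h : ∀ (r : E) (s : F), c * (‖r‖^2 + ‖s‖^2) ≤ ‖r‖^2 + ‖s‖^2 - 2 * α * ⟪H r, s⟫) (x : E × F) :
    (pipgCore H α c hc h).inner x x = ‖x.1‖^2 + ‖x.2‖^2 - 2 * α * ⟪H x.1, x.2⟫ := by
  change ⟪x.1, x.1⟫ + ⟪x.2, x.2⟫ - α * ⟪H x.1, x.2⟫ - α * ⟪H x.1, x.2⟫ = _
  rw [real_inner_self_eq_norm_sq, real_inner_self_eq_norm_sq]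
  ring

lemma pipg_descent (P : E →L[ℝ] E) (hPsym : ∀ x y, ⟪P x, y⟫ = ⟪x, P y⟫) (hPpsd : ∀ x, 0 ≤ ⟪P x, x⟫)
    (H : E →L[ℝ] F) (α lam ν : ℝ) (hα0 : 0 < α) (hlam : ‖P‖ ≤ lam) (hν : ‖H‖ ≤ ν)
    (hs : (α * ν)^2 < 1 - α * lam / 2) (a a' : E) (b b' : F)
    (h1 : 0 ≤ ⟪(a - α • (P a + adjoint H b)) - a', a'⟫)
    (h2 : 0 ≤ ⟪(b + α • H (a' + (a' - a))) - b', b'⟫) :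
    (‖a'‖^2 + ‖b'‖^2 - 2 * α * ⟪H a', b'⟫) + ((1 - α * lam / 2) - (α * ν)^2) / 4 *
      (‖a' - a‖^2 + ‖b' - b‖^2 - 2 * α * ⟪H (a' - a), b' - b⟫)
      ≤ ‖a‖^2 + ‖b‖^2 - 2 * α * ⟪H a, b⟫ := by
  have hlam0 : 0 ≤ lam := (norm_nonneg _).trans hlam
  have hν0 : 0 ≤ ν := (norm_nonneg _).trans hν
  obtain ⟨r, rfl⟩ : ∃ r, a' = a + r := ⟨a' - a, by abel⟩
  obtain ⟨s, rfl⟩ : ∃ s, b' = b + s := ⟨b' - b, by abel⟩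
  have ht1 : 1 - α * lam / 2 ≤ 1 := by have := mul_nonneg hα0.le hlam0; linarith
  have hq := quad_pos H α (1 - α * lam / 2) ν hα0 hν ht1 hs r s
  set c := ((1 - α * lam / 2) - (α * ν)^2) / 2 with hc
  have hc0 : 0 < c := by rw [hc]; linarith
  -- upper bound for the form
  have hup : ‖r‖^2 + ‖s‖^2 - 2 * α * ⟪H r, s⟫ ≤ 2 * (‖r‖^2 + ‖s‖^2) := by
    have := quad_pos H α (1 - α * lam / 2) ν hα0 hν ht1 hs r (-s)
    rw [inner_neg_right, norm_neg, ← hc] at this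
    have h3 : 0 ≤ c * (‖r‖^2 + ‖s‖^2) := by positivity
    have h4 : 0 ≤ α * lam / 2 * ‖r‖^2 := by positivity
    linarith
  have hPr : ⟪P r, r⟫ ≤ lam * ‖r‖^2 := by
    calc ⟪P r, r⟫ ≤ ‖P r‖ * ‖r‖ := real_inner_le_norm _ _
      _ ≤ (lam * ‖r‖) * ‖r‖ := by
        gcongr
        exact (P.le_opNorm r).trans (by gcongr)
      _ = _ := by ring
  have hPa : -(lam * ‖r‖^2) ≤ 4 * ⟪P a, a + r⟫ := by
    have := hPpsd ((2:ℝ) • a + r)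
    simp only [map_add, map_smul, inner_add_left, inner_add_right, real_inner_smul_left,
      real_inner_smul_right] at this
    have e : ⟪P r, a⟫ = ⟪P a, r⟫ := by rw [hPsym, real_inner_comm]
    rw [e] at this
    rw [inner_add_right]
    linarith
  have hPa' := mul_le_mul_of_nonneg_left hPa hα0.le
  have hcq : c / 2 * (‖r‖^2 + ‖s‖^2 - 2 * α * ⟪H r, s⟫) ≤ c / 2 * (2 * (‖r‖^2 + ‖s‖^2)) := by gcongr
  have hc2 : ((1 - α * lam / 2) - (α * ν)^2) / 4 = c / 2 := by rw [hc]; ring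
  rw [hc2]
  have e1 : ⟪(a - α • (P a + adjoint H b)) - (a + r), a + r⟫ =
      -⟪r, a⟫ - ‖r‖^2 - α * ⟪P a, a + r⟫ - α * (⟪H a, b⟫ + ⟪H r, b⟫) := by
    have : (a - α • (P a + adjoint H b)) - (a + r) = - r - α • P a - α • adjoint H b := by
      module
    rw [this, inner_sub_left, inner_sub_left, inner_neg_left, real_inner_smul_left,
      real_inner_smul_left, adjoint_inner_left, map_add, inner_add_right r, inner_add_right b,
      real_inner_self_eq_norm_sq, real_inner_comm b (H a), real_inner_comm b (H r)]
    ring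
  have e2 : ⟪(b + α • H (a + r + (a + r - a))) - (b + s), b + s⟫ =
      -⟪s, b⟫ - ‖s‖^2 + α * (⟪H a, b⟫ + ⟪H a, s⟫ + 2 * ⟪H r, b⟫ + 2 * ⟪H r, s⟫) := by
    have : (b + α • H (a + r + (a + r - a))) - (b + s) = - s + α • (H a + (2:ℝ) • H r) := by
      have h3 : a + r + (a + r - a) = a + (2:ℝ) • r := by module
      rw [h3, map_add, map_smul]; module
    rw [this, inner_add_left, inner_neg_left, real_inner_smul_left, inner_add_right s,
      real_inner_self_eq_norm_sq, inner_add_left, real_inner_smul_left, inner_add_right,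
      inner_add_right]
    ring
  rw [e1] at h1
  rw [e2] at h2
  rw [add_sub_cancel_left, add_sub_cancel_left, norm_add_sq_real, norm_add_sq_real, map_add,
    inner_add_left, inner_add_right, inner_add_right, real_inner_comm r a, real_inner_comm s b]
  linarith

lemma pipg_diff (P : E →L[ℝ] E) (hPsym : ∀ x y, ⟪P x, y⟫ = ⟪x, P y⟫) (hPpsd : ∀ x, 0 ≤ ⟪P x, x⟫)
    (H : E →L[ℝ] F) (α lam ν : ℝ) (hα0 : 0 < α) (hlam : ‖P‖ ≤ lam) (hν : ‖H‖ ≤ ν)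
    (hs : (α * ν)^2 < 1 - α * lam / 2) (q : E) (g : F) (D : Set E)
    (hDne : D.Nonempty) (hDcl : IsClosed D) (hDconv : Convex ℝ D)
    (C : Set F) (hCne : C.Nonempty) (hCcl : IsClosed C) (hCconv : Convex ℝ C)
    (z : ℕ → E) (W : ℕ → F)
    (hz : ∀ n, z (n+1) = _root_.proj D (z n - α • (P (z n) + q + adjoint H (W n))))
    (hW : ∀ n, W (n+1) = _root_.proj C (W n + α • (H (z (n+1) + (z (n+1) - z n)) - g))) :
    ∃ zbar wbar, Tendsto (fun n => z (n+1) - z n) atTop (𝓝 zbar) ∧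
      Tendsto (fun n => W (n+1) - W n) atTop (𝓝 wbar) := by
  have hlam0 : 0 ≤ lam := (norm_nonneg _).trans hlam
  have ht1 : 1 - α * lam / 2 ≤ 1 := by have := mul_nonneg hα0.le hlam0; linarith
  have hs1 : (α * ν)^2 < 1 := lt_of_lt_of_le hs ht1
  have hq : ∀ (r : E) (s : F), (1 - (α * ν)^2)/2 * (‖r‖^2 + ‖s‖^2)
      ≤ ‖r‖^2 + ‖s‖^2 - 2 * α * ⟪H r, s⟫ := by
    intro r s
    have := quad_pos H α 1 ν hα0 hν le_rfl hs1 r s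
    linarith
  obtain ⟨f, hf⟩ := kn_core (pipgCore H α _ (by linarith) hq) (fun n => (z n, W n))
    (((1 - α * lam / 2) - (α * ν)^2) / 4) (by linarith) (by
      intro n m
      have hd := pipg_descent P hPsym hPpsd H α lam ν hα0 hlam hν hs (z n - z m) (z (n+1) - z (m+1))
        (W n - W m) (W (n+1) - W (m+1)) (by
          have := proj_mono D hDne hDcl hDconv (z n - α • (P (z n) + q + adjoint H (W n)))
            (z m - α • (P (z m) + q + adjoint H (W m)))
          rw [← hz, ← hz] at this
          convert this using 3
          simp only [map_sub]
          module) (by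
          have := proj_mono C hCne hCcl hCconv (W n + α • (H (z (n+1) + (z (n+1) - z n)) - g))
            (W m + α • (H (z (m+1) + (z (m+1) - z m)) - g))
          rw [← hW, ← hW] at this
          convert this using 3
          simp only [map_sub, map_add]
          module)
      have e1 : (z (n+1) - z n) - (z (m+1) - z m) = (z (n+1) - z (m+1)) - (z n - z m) := by abel
      have e2 : (W (n+1) - W n) - (W (m+1) - W m) = (W (n+1) - W (m+1)) - (W n - W m) := by abel
      rw [pipgCore_self, pipgCore_self, pipgCore_self]
      simp only [Prod.fst_sub, Prod.snd_sub, e1, e2]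
      exact hd)
  refine ⟨f.1, f.2, ?_, ?_⟩
  · exact hf (LinearMap.fst ℝ E F)
  · exact hf (LinearMap.snd ℝ E F)

lemma lim_div (u : ℕ → E) (l : E) (h : Tendsto (fun n => u (n+1) - u n) atTop (𝓝 l)) :
    Tendsto (fun n : ℕ => (n:ℝ)⁻¹ • u n) atTop (𝓝 l) ∧
    Tendsto (fun n : ℕ => (n:ℝ)⁻¹ • u (n+1)) atTop (𝓝 l) := by
  have hi := tendsto_inv_atTop_nhds_zero_nat (𝕜 := ℝ)
  have h1 := h.cesaro_smul
  have h2 : Tendsto (fun n : ℕ => (n:ℝ)⁻¹ • u n) atTop (𝓝 l) := by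
    have h3 := h1.add (hi.smul_const (u 0))
    rw [zero_smul, add_zero] at h3
    refine h3.congr (fun n => ?_)
    rw [Finset.sum_range_sub]; module
  refine ⟨h2, ?_⟩
  have h3 := h2.add (hi.smul h)
  rw [zero_smul, add_zero] at h3
  refine h3.congr (fun n => ?_)
  module

lemma psd_zero (P : E →L[ℝ] E) (hPsym : ∀ x y, ⟪P x, y⟫ = ⟪x, P y⟫) (hPpsd : ∀ x, 0 ≤ ⟪P x, x⟫)
    (x : E) (hx : ⟪P x, x⟫ ≤ 0) : P x = 0 := by
  by_contra hne
  have hN : 0 < ⟪P x, P x⟫ := real_inner_self_pos.2 hne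
  set N := ⟪P x, P x⟫ with hNdef
  have hC := hPpsd (P x)
  set C := ⟪P (P x), P x⟫ with hCdef
  have key : ∀ s : ℝ, 2 * s * N ≤ s^2 * C := by
    intro s
    have := hPpsd (x - s • P x)
    have e : ⟪P (P x), x⟫ = N := by rw [hPsym]
    simp only [map_sub, map_smul, inner_sub_left, inner_sub_right, real_inner_smul_left,
      real_inner_smul_right, e, ← hNdef, ← hCdef] at this
    nlinarith
  have h1 := key (N / (C + 1))
  have h2 : 0 < N / (C + 1) := by positivity
  have h3 : N / (C+1) * (C + 1) = N := by field_simp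
  nlinarith

lemma pipg_concl (P : E →L[ℝ] E) (hPsym : ∀ x y, ⟪P x, y⟫ = ⟪x, P y⟫) (hPpsd : ∀ x, 0 ≤ ⟪P x, x⟫)
    (H : E →L[ℝ] F) (α : ℝ) (hα0 : 0 < α) (q : E) (g : F) (D : Set E)
    (hDne : D.Nonempty) (hDcl : IsClosed D) (hDconv : Convex ℝ D)
    (K : Set F) (hKne : K.Nonempty) (hKcl : IsClosed K) (hKconv : Convex ℝ K)
    (hKcone : ∀ w ∈ K, ∀ a : ℝ, 0 ≤ a → a • w ∈ K)
    (z : ℕ → E) (W : ℕ → F) (hzD : ∀ n, z (n+1) ∈ D) (hWK : ∀ n, W n ∈ polarCone K)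
    (hz : ∀ n, ∀ y ∈ D,
      0 ≤ ⟪(z (n+1) - z n) + α • (P (z n) + q + adjoint H (W n)), y - z (n+1)⟫)
    (hp0 : ∀ n, ⟪-(W (n+1) - W n) + α • (H (z (n+1)) + H (z (n+1) - z n) - g), W (n+1)⟫ = 0)
    (hp1 : ∀ n, ∀ u ∈ polarCone K,
      ⟪-(W (n+1) - W n) + α • (H (z (n+1)) + H (z (n+1) - z n) - g), u⟫ ≤ 0)
    (zbar : E) (wbar : F) (hd : Tendsto (fun n => z (n+1) - z n) atTop (𝓝 zbar))
    (he : Tendsto (fun n => W (n+1) - W n) atTop (𝓝 wbar)) :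
    zbar ∈ recCone D ∧ wbar ∈ polarCone K ∧ H zbar ∈ K ∧ P zbar = 0 ∧
      ⟪q, zbar⟫ = -(1/α) * ‖zbar‖^2 ∧
      sSup {r : ℝ | ∃ y ∈ D, r = ⟪y, -(adjoint H wbar)⟫}
          + ⟪g, wbar⟫ = -(1/α) * ‖wbar‖^2 := by
  have hi := tendsto_inv_atTop_nhds_zero_nat (𝕜 := ℝ)
  obtain ⟨hz0, hz1⟩ := lim_div z zbar hd
  obtain ⟨hW0, hW1⟩ := lim_div W wbar he
  obtain ⟨-, hPcl, -, hPcone⟩ := polar_props K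
  have hHd := (H.continuous.tendsto zbar).comp hd
  have hHz1 := (H.continuous.tendsto zbar).comp hz1
  have hPz0 := (P.continuous.tendsto zbar).comp hz0
  have hHW0 := ((adjoint H).continuous.tendsto wbar).comp hW0
  simp only [Function.comp_def] at hHd hHz1 hPz0 hHW0
  have hinv : ∀ n : ℕ, (0:ℝ) ≤ (n:ℝ)⁻¹ := fun n => by positivity
  -- recession
  have hrec : zbar ∈ recCone D := by
    intro y hy
    have h1 : Tendsto (fun n : ℕ => (n:ℝ)⁻¹ • z (n+1) + (1 - (n:ℝ)⁻¹) • y) atTop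
        (𝓝 (zbar + (1 - (0:ℝ)) • y)) := hz1.add ((hi.const_sub 1).smul_const y)
    rw [sub_zero, one_smul] at h1
    refine hDcl.mem_of_tendsto h1 ?_
    filter_upwards [eventually_ge_atTop 1] with n hn
    have : (n:ℝ)⁻¹ ≤ 1 := inv_le_one_of_one_le₀ (by exact_mod_cast hn)
    exact hDconv (hzD n) hy (hinv n) (by linarith) (by ring)
  have hwb : wbar ∈ polarCone K :=
    hPcl.mem_of_tendsto hW0 (Eventually.of_forall fun n => hPcone _ (hWK n) _ (hinv n))
  -- the dual residual
  have hpn : Tendsto (fun n : ℕ => (n:ℝ)⁻¹ •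
      (-(W (n+1) - W n) + α • (H (z (n+1)) + H (z (n+1) - z n) - g))) atTop (𝓝 (α • H zbar)) := by
    have h1 := ((hi.smul he).neg).add ((((hHz1).add (hi.smul hHd)).sub (hi.smul_const g)).const_smul α)
    simp only [zero_smul, neg_zero, zero_add, add_zero, sub_zero] at h1
    refine h1.congr (fun n => ?_)
    rw [map_smul]
    module
  have hHK : H zbar ∈ K := by
    have h1 : α • H zbar ∈ K := hKcl.mem_of_tendsto hpn (Eventually.of_forall fun n =>
      hKcone _ (bipolar K hKne hKcl hKconv hKcone _ (hp1 n)) _ (hinv n))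
    have h2 := hKcone _ h1 α⁻¹ (by positivity)
    rwa [smul_smul, inv_mul_cancel₀ hα0.ne', one_smul] at h2
  have hHw : ⟪H zbar, wbar⟫ = 0 := by
    have h1 := hpn.inner (𝕜 := ℝ) hW1
    have h2 := tendsto_nhds_unique (h1.congr (fun n => by
      rw [real_inner_smul_left, real_inner_smul_right, hp0 n, mul_zero, mul_zero]))
      (tendsto_const_nhds (x := (0:ℝ)))
    rw [real_inner_smul_left] at h2
    exact (mul_eq_zero.1 h2).resolve_left hα0.ne'
  have hrn : Tendsto (fun n : ℕ => (n:ℝ)⁻¹ •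
      ((z (n+1) - z n) + α • (P (z n) + q + adjoint H (W n)))) atTop
      (𝓝 (α • (P zbar + adjoint H wbar))) := by
    have h1 := (hi.smul hd).add (((hPz0.add (hi.smul_const q)).add hHW0).const_smul α)
    simp only [zero_smul, zero_add, add_zero] at h1
    refine h1.congr (fun n => ?_)
    rw [map_smul, map_smul]
    module
  obtain ⟨y0, hy0⟩ := hDne
  have hPz : P zbar = 0 := by
    refine psd_zero P hPsym hPpsd zbar ?_
    have h1 := (hi.smul_const y0).sub hz1
    have h2 := hrn.inner (𝕜 := ℝ) h1
    have h3 := ge_of_tendsto' h2 (fun n => by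
      rw [← smul_sub, real_inner_smul_left, real_inner_smul_right]
      exact mul_nonneg (hinv n) (mul_nonneg (hinv n) (hz n y0 hy0)))
    rw [zero_smul, zero_sub, inner_neg_right, real_inner_smul_left, inner_add_left,
      adjoint_inner_left, real_inner_comm, real_inner_comm (H zbar), hHw, add_zero] at h3
    rw [real_inner_comm]
    nlinarith
  have hA : 0 ≤ ‖zbar‖^2 + α * ⟪q, zbar⟫ := by
    have h1 : Tendsto (fun n => ⟪z (n+1) - z n, zbar⟫ + α * ⟪q, zbar⟫) atTop
        (𝓝 (⟪zbar, zbar⟫ + α * ⟪q, zbar⟫)) :=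
      (hd.inner tendsto_const_nhds).add_const _
    rw [real_inner_self_eq_norm_sq] at h1
    refine ge_of_tendsto' h1 (fun n => ?_)
    have h2 := hz n _ (hrec _ (hzD n))
    rw [add_sub_cancel_right, inner_add_left, real_inner_smul_left, inner_add_left, inner_add_left,
      hPsym, hPz, inner_zero_right, zero_add, adjoint_inner_left] at h2
    have h3 := mul_nonpos_of_nonneg_of_nonpos hα0.le (hWK n _ hHK)
    linarith
  have hAB : ∀ y ∈ D, ⟪y, -(adjoint H wbar)⟫ * α ≤
      -(‖zbar‖^2 + α * ⟪q, zbar⟫) - (‖wbar‖^2 + α * ⟪g, wbar⟫) := by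
    intro y hy
    have t1 := hrn.inner (𝕜 := ℝ) (tendsto_const_nhds (x := y))
    have t2 := (hd.add_const (α • q)).inner (𝕜 := ℝ) hz1
    have t3 := (hPz0.inner (𝕜 := ℝ) hd).const_mul α
    have t4 := ((he.sub (hHd.const_smul α)).add_const (α • g)).inner (𝕜 := ℝ) hW1
    have t5 := (hHz1.inner (𝕜 := ℝ) he).const_mul α
    have t := (((t1.sub t2).sub t3).sub (t4.sub t5))
    have h0 := ge_of_tendsto' (b := (0:ℝ)) t ?_
    · simp only [hPz, hHw, inner_zero_left, zero_add, mul_zero, sub_zero, real_inner_smul_left,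
        inner_add_left, inner_sub_left, real_inner_self_eq_norm_sq, adjoint_inner_left] at h0
      rw [inner_neg_right, real_inner_comm, adjoint_inner_left]
      linarith
    · intro n
      have h1 := mul_nonneg (hinv n) (hz n y hy)
      have h2 := congrArg (fun r => (n:ℝ)⁻¹ * r) (hp0 n)
      have h3 := mul_nonneg hα0.le (mul_nonneg (hinv n) (hPpsd (z n)))
      obtain ⟨d, hdd⟩ : ∃ d, z (n+1) - z n = d := ⟨_, rfl⟩
      obtain ⟨e, hee⟩ : ∃ e, W (n+1) - W n = e := ⟨_, rfl⟩
      have hz' : z (n+1) = z n + d := by rw [← hdd]; abel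
      have hW' : W (n+1) = W n + e := by rw [← hee]; abel
      rw [hdd] at h1 h2
      rw [hee] at h2
      rw [hdd, hee]
      rw [hz'] at h1 h2 ⊢
      rw [hW'] at h2 ⊢
      simp only [map_smul, map_add, mul_zero, inner_add_left, inner_add_right, inner_sub_left,
        inner_sub_right, inner_neg_left, inner_neg_right, real_inner_smul_left,
        real_inner_smul_right, adjoint_inner_left] at h1 h2 ⊢
      rw [real_inner_comm (H (z n)) (W n), real_inner_comm (H d) (W n)] at h1
      linarith
  have hbdd : BddAbove {r : ℝ | ∃ y ∈ D, r = ⟪y, -(adjoint H wbar)⟫} := by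
    refine ⟨(-(‖zbar‖^2 + α * ⟪q, zbar⟫) - (‖wbar‖^2 + α * ⟪g, wbar⟫)) / α, ?_⟩
    rintro _ ⟨y, hy, rfl⟩
    rw [le_div_iff₀ hα0]
    exact hAB y hy
  have hσ1 : sSup {r : ℝ | ∃ y ∈ D, r = ⟪y, -(adjoint H wbar)⟫} * α ≤
      -(‖zbar‖^2 + α * ⟪q, zbar⟫) - (‖wbar‖^2 + α * ⟪g, wbar⟫) := by
    rw [← le_div_iff₀ hα0]
    refine csSup_le ⟨_, y0, hy0, rfl⟩ ?_
    rintro _ ⟨y, hy, rfl⟩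
    rw [le_div_iff₀ hα0]
    exact hAB y hy
  have hσ0 : ∀ y ∈ D, ⟪y, -(adjoint H wbar)⟫ ≤
      sSup {r : ℝ | ∃ y ∈ D, r = ⟪y, -(adjoint H wbar)⟫} :=
    fun y hy => le_csSup hbdd ⟨y, hy, rfl⟩
  set σ := sSup {r : ℝ | ∃ y ∈ D, r = ⟪y, -(adjoint H wbar)⟫}
  have hσ2 : 0 ≤ (‖wbar‖^2 + α * ⟪g, wbar⟫) + σ * α := by
    have t := (((he.inner (𝕜 := ℝ) (tendsto_const_nhds (x := wbar))).add_const
      (α * ⟪g, wbar⟫)).sub ((hHd.inner (𝕜 := ℝ) (tendsto_const_nhds (x := wbar))).const_mul α)).add_const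
      (σ * α)
    rw [hHw, mul_zero, sub_zero, real_inner_self_eq_norm_sq] at t
    refine ge_of_tendsto' t (fun n => ?_)
    have h1 := hp1 n wbar hwb
    have h2 := mul_le_mul_of_nonneg_right (hσ0 _ (hzD n)) hα0.le
    rw [inner_neg_right, real_inner_comm, adjoint_inner_left, real_inner_comm] at h2
    simp only [inner_add_left, inner_neg_left, real_inner_smul_left, inner_sub_left] at h1 ⊢
    linarith
  refine ⟨hrec, hwb, hHK, hPz, ?_, ?_⟩
  · have : ‖zbar‖^2 + α * ⟪q, zbar⟫ = 0 := by linarith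
    field_simp
    linarith
  · have : (‖wbar‖^2 + α * ⟪g, wbar⟫) + σ * α = 0 := by linarith
    field_simp
    linarith
end Pipg

/-- the differences of consecutive PIPG iterates converge to limits
`z̄ ∈ rec D`, `w̄ ∈ K°` satisfying the stated conditions. -/
theorem stmt4 {n m : ℕ} (α : ℝ)
    (P : EuclideanSpace ℝ (Fin n) →L[ℝ] EuclideanSpace ℝ (Fin n))
    (hPsa : IsSelfAdjoint P) (hPpsd : ∀ x, 0 ≤ ⟪P x, x⟫)
    (q : EuclideanSpace ℝ (Fin n))
    (H : EuclideanSpace ℝ (Fin n) →L[ℝ] EuclideanSpace ℝ (Fin m))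
    (g : EuclideanSpace ℝ (Fin m))
    (D : Set (EuclideanSpace ℝ (Fin n)))
    (hDne : D.Nonempty) (hDcl : IsClosed D) (hDconv : Convex ℝ D)
    (K : Set (EuclideanSpace ℝ (Fin m)))
    (hKne : K.Nonempty) (hKcl : IsClosed K) (hKconv : Convex ℝ K)
    (hKcone : ∀ w ∈ K, ∀ a : ℝ, 0 ≤ a → a • w ∈ K)
    (w v : ℕ → EuclideanSpace ℝ (Fin m))
    (z : ℕ → EuclideanSpace ℝ (Fin n))
    (hw : ∀ j : ℕ, w (j + 1) = proj (polarCone K) (v j + α • (H (z j) - g)))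
    (hz : ∀ j : ℕ, z (j + 1) =
      proj D (z j - α • (P (z j) + q + (ContinuousLinearMap.adjoint H) (w (j + 1)))))
    (hv : ∀ j : ℕ, v (j + 1) = w (j + 1) + α • H (z (j + 1) - z j))
    (γ lam ν : ℝ) (hγ : 1/2 < γ) (hγ1 : γ < 1)
    (hlam : ‖P‖ ≤ lam) (hν : ‖H‖ ≤ ν) (hα0 : 0 < α)
    (hα : α ≤ (8 - 4/γ) / (Real.sqrt (lam^2 + 16*ν^2) + lam))
    :
    ∃ zbar ∈ recCone D, ∃ wbar ∈ polarCone K,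
      Tendsto (fun j : ℕ => z (j + 1) - z j) atTop (𝓝 zbar) ∧
      Tendsto (fun j : ℕ => w (j + 1) - w j) atTop (𝓝 wbar) ∧
      H zbar ∈ K ∧ P zbar = 0 ∧
      ⟪q, zbar⟫ = -(1/α) * ‖zbar‖^2 ∧
      sSup {r : ℝ | ∃ y ∈ D, r = ⟪y, -((ContinuousLinearMap.adjoint H) wbar)⟫}
          + ⟪g, wbar⟫ = -(1/α) * ‖wbar‖^2 := by
  have hs := step_cond α γ lam ν hγ hγ1 ((norm_nonneg _).trans hlam) hα0 hα
  have hPsym : ∀ x y, ⟪P x, y⟫ = ⟪x, P y⟫ := by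
    intro x y
    have h1 := adjoint_inner_left P y x
    rwa [hPsa.adjoint_eq] at h1
  obtain ⟨hCne, hCcl, hCconv, hCcone⟩ := polar_props K
  have hW : ∀ n, w (n+1+1) = _root_.proj (polarCone K)
      (w (n+1) + α • (H (z (n+1) + (z (n+1) - z n)) - g)) := by
    intro n
    rw [hw (n+1), hv n]
    congr 1
    rw [map_add]
    module
  obtain ⟨zbar, wbar, hzl, hwl⟩ := pipg_diff P hPsym hPpsd H α lam ν hα0 hlam hν hs q g D hDne hDcl
    hDconv (polarCone K) hCne hCcl hCconv z (fun n => w (n+1)) hz hW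
  have hvi := fun n => proj_spec (polarCone K) hCne hCcl hCconv
    (w (n+1) + α • (H (z (n+1) + (z (n+1) - z n)) - g))
  have hcv : ∀ n, ⟪-(w (n+1+1) - w (n+1)) + α • (H (z (n+1)) + H (z (n+1) - z n) - g),
      w (n+1+1)⟫ = 0 ∧ ∀ u ∈ polarCone K,
      ⟪-(w (n+1+1) - w (n+1)) + α • (H (z (n+1)) + H (z (n+1) - z n) - g), u⟫ ≤ 0 := by
    intro n
    obtain ⟨h1, h2⟩ := hvi n
    rw [← hW n] at h1 h2
    refine cone_vi (polarCone K) hCcone _ _ h1 (fun y hy => ?_)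
    have h3 := h2 y hy
    convert h3 using 2
    rw [map_add]
    module
  obtain ⟨c1, c2, c3, c4, c5, c6⟩ := pipg_concl P hPsym hPpsd H α hα0 q g D hDne hDcl hDconv K hKne
    hKcl hKconv hKcone z (fun n => w (n+1))
    (fun n => by rw [hz n]; exact (proj_spec D hDne hDcl hDconv _).1)
    (fun n => by simp only [hw n]; exact (proj_spec (polarCone K) hCne hCcl hCconv _).1)
    (fun n y hy => by
      have h1 := (proj_spec D hDne hDcl hDconv
        (z n - α • (P (z n) + q + adjoint H (w (n+1))))).2 y hy
      rw [← hz n] at h1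
      rw [← neg_nonpos, ← inner_neg_left]
      convert h1 using 2
      module)
    (fun n => (hcv n).1) (fun n => (hcv n).2) zbar wbar hzl hwl
  exact ⟨zbar, c1, wbar, c2, hzl, (tendsto_add_atTop_iff_nat 1).1 hwl, c3, c4, c5, c6⟩
end
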